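/- Fix an integer j ≥ 1 and let D be the diagonal matrix diag(z^j, z^{−j}) over A (note z is a unit of A). Let N be a 2×2 matrix with entries in O_U such that all entries of D·N·D^{−1} lie in O_V. Then N is invertible over O_U (i.e. det N is a unit of O_U) and D·N·D^{−1} is invertible over O_V if and only if the coefficient of z⁰u⁰ in det N is nonzero. (This identifies the automorphism group G_{j,k}^{(n)} of O(j) ⊕ O(−j) on Z_k^{(n)} as the complement of the vanishing locus of the map det₀ given by restricting the determinant to the zero section.) -/

import Mathlib

set_option synthInstance.maxHeartbeats 1000000
set_option maxHeartbeats 1000000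

noncomputable section

/-- The ring of Laurent polynomials `ℂ[z,z⁻¹]`. -/
abbrev Lz : Type := LaurentPolynomial ℂ

/-- The ring `P = ℂ[z,z⁻¹][[u]]` of formal power series in `u` with Laurent
polynomial coefficients. -/
abbrev Pz : Type := PowerSeries Lz

/-- The monomial `z^l u^i` as an element of `P`. -/
def mon (l : ℤ) (i : ℕ) : Pz := PowerSeries.monomial (R := Lz) i (LaurentPolynomial.T l)

/-- The coefficient of `z^l` in a Laurent polynomial, as a `ℂ`-linear map. -/
def coeffL (l : ℤ) : Lz →ₗ[ℂ] ℂ :=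
  (Finsupp.lapply l).comp (AddMonoidAlgebra.coeffLinearEquiv ℂ).toLinearMap

/-- The coefficient of `z^l u^i` in an element of `P`, as a `ℂ`-linear map. -/
def coeffP (l : ℤ) (i : ℕ) : Pz →ₗ[ℂ] ℂ :=
  (coeffL l).comp ((PowerSeries.coeff (R := Lz) i).restrictScalars ℂ)

/-- The ideal `(u^{n+1})` of `P`. -/
def In (n : ℕ) : Ideal Pz := Ideal.span {(PowerSeries.X : Pz) ^ (n + 1)}

/-- The ring `A = ℂ[z,z⁻¹][u]/(u^{n+1})`, the coordinate ring of the overlap of the two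
standard charts of the `n`-th infinitesimal neighborhood `Z_k^{(n)}`. -/
abbrev Aq (n : ℕ) : Type := Pz ⧸ In n

/-- The quotient map `P → A`. -/
def toA (n : ℕ) : Pz →+* Aq n := Ideal.Quotient.mk (In n)

/-- The monomial `z^l u^i` as an element of `A`. -/
def monA (n : ℕ) (l : ℤ) (i : ℕ) : Aq n := toA n (mon l i)

/-- `O_U ⊆ A`: the `ℂ`-span of the monomials `z^l u^i` with `l ≥ 0`, `0 ≤ i ≤ n`. -/
def OU (n : ℕ) : Submodule ℂ (Aq n) :=
  Submodule.span ℂ {x | ∃ l : ℤ, ∃ i : ℕ, 0 ≤ l ∧ i ≤ n ∧ x = monA n l i}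

/-- `O_V ⊆ A`: the `ℂ`-span of the monomials `z^l u^i` with `l ≤ k·i`, `0 ≤ i ≤ n`. -/
def OV (k n : ℕ) : Submodule ℂ (Aq n) :=
  Submodule.span ℂ {x | ∃ l : ℤ, ∃ i : ℕ, l ≤ k * i ∧ i ≤ n ∧ x = monA n l i}

/-- The submodule `a·S` obtained from a submodule `S` by multiplying by a fixed element `a`. -/
def msmul {n : ℕ} (a : Aq n) (S : Submodule ℂ (Aq n)) : Submodule ℂ (Aq n) :=
  Submodule.map (LinearMap.mulLeft ℂ a) S

/-- The coefficient of the monomial `z^0 u^0` in an element of `A` (well defined since the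
ideal `(u^{n+1})` has vanishing `u^0`-coefficient). -/
def c00 (n : ℕ) : Aq n →ₗ[ℂ] ℂ := by
  refine (Submodule.liftQ ((In n).restrictScalars ℂ) (coeffP 0 0) ?_).comp
    (Submodule.Quotient.restrictScalarsEquiv ℂ ((In n) : Submodule Pz Pz)).symm.toLinearMap
  intro x hx
  simp only [Submodule.restrictScalars_mem, In, Ideal.mem_span_singleton] at hx
  obtain ⟨g, rfl⟩ := hx
  simp only [LinearMap.mem_ker, coeffP, coeffL, LinearMap.comp_apply,
    LinearMap.restrictScalars_apply]
  have h : (PowerSeries.coeff (R := Lz) 0) ((PowerSeries.X : Pz) ^ (n + 1) * g) = 0 := by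
    rw [PowerSeries.coeff_zero_eq_constantCoeff, map_mul, map_pow,
      PowerSeries.constantCoeff_X, zero_pow (Nat.succ_ne_zero n), zero_mul]
  rw [h]
  simp

/-!
Conjugation does not change the determinant, so `det N` lies in `O_U ∩ O_V`. On the zero section
`u = 0` an element of `O_U` has no negative powers of `z` and an element of `O_V` no positive ones,
so `det N` restricts there to the constant `c = c00 n N.det`. The kernel `(u)` of the restriction
is nilpotent, hence `det N` is `c` plus a nilpotent element of each of the two subalgebras, and it
is a unit of them exactly when `c ≠ 0`.
-/

section Subring

variable {ι R A σ : Type*}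

lemma det_mem_of_forall_mem [Fintype ι] [DecidableEq ι] [CommRing A] [SetLike σ A]
    [SubringClass σ A] {S : σ} {M : Matrix ι ι A} (hM : ∀ a b, M a b ∈ S) : M.det ∈ S := by
  rw [Matrix.det_apply]
  exact sum_mem fun τ _ => zsmul_mem (prod_mem fun a _ => hM (τ a) a) _

lemma exists_mem_mul_eq_one_of_isNilpotent_sub_algebraMap [CommRing R] [Ring A] [Algebra R A]
    {S : Subalgebra R A} {d : A} (hd : d ∈ S) {c : R} (hc : IsUnit c)
    (hnil : IsNilpotent (d - algebraMap R A c)) : ∃ w ∈ S, d * w = 1 := by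
  have hnilS : IsNilpotent ((⟨d, hd⟩ : S) - algebraMap R S c) :=
    (IsNilpotent.map_iff (f := S.val) Subtype.val_injective).1 hnil
  have hunit : IsUnit (⟨d, hd⟩ : S) := by
    simpa only [sub_add_cancel] using hnilS.isUnit_add_right_of_commute
      (hc.map (algebraMap R S)) (Algebra.commutes c _).symm
  obtain ⟨w, hw⟩ := hunit.exists_right_inv
  exact ⟨w, w.2, congrArg Subtype.val hw⟩

end Subring

section Monomials

variable (n : ℕ)

lemma monA_mul_monA (l m : ℤ) (i i' : ℕ) :
    monA n l i * monA n m i' = monA n (l + m) (i + i') := by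
  simp only [monA, mon, ← map_mul, PowerSeries.monomial_mul_monomial, LaurentPolynomial.T_add]

lemma monA_zero_zero : monA n 0 0 = 1 := by
  rw [monA, mon, LaurentPolynomial.T_zero, PowerSeries.monomial_zero_eq_C_apply, map_one, map_one]

variable {n} in
lemma monA_eq_zero_of_lt (l : ℤ) {i : ℕ} (hi : n < i) : monA n l i = 0 := by
  rw [monA, toA, Ideal.Quotient.eq_zero_iff_mem, In, Ideal.mem_span_singleton,
    PowerSeries.X_pow_dvd_iff]
  intro m hm
  rw [mon, PowerSeries.coeff_monomial, if_neg (by lia)]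

/-- The subalgebra of `A` spanned by the monomials `z^l u^i` with `i ≤ n` and exponent `(l, i)` in
the submonoid `M` of `ℤ × ℕ`. Both chart rings `O_U` and `O_V` are of this form. -/
def monomialSubalgebra (M : AddSubmonoid (ℤ × ℕ)) : Subalgebra ℂ (Aq n) :=
  (Submodule.span ℂ {x | ∃ l : ℤ, ∃ i : ℕ, (l, i) ∈ M ∧ i ≤ n ∧ x = monA n l i}).toSubalgebra
    (Submodule.subset_span ⟨0, 0, M.zero_mem, n.zero_le, (monA_zero_zero n).symm⟩) <| by
    intro x y hx hy
    refine (Submodule.span_mul_span ℂ _ _).trans_le (Submodule.span_le.2 ?_)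
      (Submodule.mul_mem_mul hx hy)
    rintro _ ⟨_, ⟨l, i, hli, -, rfl⟩, _, ⟨m, i', hmi', -, rfl⟩, rfl⟩
    change monA n l i * monA n m i' ∈ _
    rw [monA_mul_monA]
    rcases le_or_gt (i + i') n with hi | hi
    · exact Submodule.subset_span ⟨_, _, M.add_mem hli hmi', hi, rfl⟩
    · exact monA_eq_zero_of_lt (l + m) hi ▸ Submodule.zero_mem _

end Monomials

/-- `O_U` as a subalgebra of `A`. -/
def subalgebraU (n : ℕ) : Subalgebra ℂ (Aq n) :=
  monomialSubalgebra n
    { carrier := {p | 0 ≤ p.1}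
      zero_mem' := le_refl (0 : ℤ)
      add_mem' := fun {p q} (hp : 0 ≤ p.1) (hq : 0 ≤ q.1) => add_nonneg hp hq }

/-- `O_V` as a subalgebra of `A`. -/
def subalgebraV (k n : ℕ) : Subalgebra ℂ (Aq n) :=
  monomialSubalgebra n
    { carrier := {p | p.1 ≤ k * p.2}
      zero_mem' := by simp
      add_mem' := fun {p q} (hp : p.1 ≤ k * p.2) (hq : q.1 ≤ k * q.2) => by
        simpa [mul_add] using add_le_add hp hq }

lemma mem_subalgebraU {n : ℕ} {x : Aq n} : x ∈ subalgebraU n ↔ x ∈ OU n := Iff.rfl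

lemma mem_subalgebraV {k n : ℕ} {x : Aq n} : x ∈ subalgebraV k n ↔ x ∈ OV k n := Iff.rfl

section ZeroSection

/-- Restriction to the zero section: the evaluation `A → ℂ[z,z⁻¹]` at `u = 0`. -/
def restrictZeroSection (n : ℕ) : Aq n →ₐ[ℂ] Lz :=
  Ideal.Quotient.liftₐ (In n)
    { PowerSeries.constantCoeff (R := Lz) with commutes' := fun _ => rfl } <| by
    intro p hp
    obtain ⟨q, rfl⟩ := Ideal.mem_span_singleton.1 hp
    change PowerSeries.constantCoeff (PowerSeries.X ^ (n + 1) * q) = 0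
    simp

variable {n : ℕ}

lemma restrictZeroSection_toA (p : Pz) :
    restrictZeroSection n (toA n p) = PowerSeries.constantCoeff p := rfl

lemma restrictZeroSection_monA (l : ℤ) (i : ℕ) :
    restrictZeroSection n (monA n l i) = if i = 0 then LaurentPolynomial.T l else 0 := by
  rw [monA, restrictZeroSection_toA, mon, ← PowerSeries.coeff_zero_eq_constantCoeff_apply,
    PowerSeries.coeff_monomial]
  simp only [eq_comm]

lemma c00_eq_coeff_restrictZeroSection (x : Aq n) :
    c00 n x = (restrictZeroSection n x).coeff 0 := by
  obtain ⟨p, rfl⟩ := Ideal.Quotient.mk_surjective x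
  change (PowerSeries.coeff 0 p).coeff 0 = (PowerSeries.constantCoeff p).coeff 0
  rw [PowerSeries.coeff_zero_eq_constantCoeff_apply]

lemma isNilpotent_of_restrictZeroSection_eq_zero {x : Aq n} (hx : restrictZeroSection n x = 0) :
    IsNilpotent x := by
  obtain ⟨p, rfl⟩ := Ideal.Quotient.mk_surjective x
  refine ⟨n + 1, ?_⟩
  rw [← map_pow, Ideal.Quotient.eq_zero_iff_mem, In, Ideal.mem_span_singleton]
  exact pow_dvd_pow_of_dvd (PowerSeries.X_dvd_iff.2 hx) _

lemma coeff_restrictZeroSection_eq_zero {M : AddSubmonoid (ℤ × ℕ)} {l : ℤ} (hl : (l, 0) ∉ M)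
    {x : Aq n} (hx : x ∈ monomialSubalgebra n M) : (restrictZeroSection n x).coeff l = 0 := by
  suffices h : Subalgebra.toSubmodule (monomialSubalgebra n M) ≤
      LinearMap.ker (coeffL l ∘ₗ (restrictZeroSection n).toLinearMap) from h hx
  refine Submodule.span_le.2 ?_
  rintro _ ⟨m, i, hmi, -, rfl⟩
  change (restrictZeroSection n (monA n m i)).coeff l = 0
  rw [restrictZeroSection_monA]
  split_ifs with hi
  · subst hi
    rw [LaurentPolynomial.T_apply, if_neg]
    rintro rfl
    exact hl hmi
  · rfl

lemma restrictZeroSection_eq_algebraMap_c00 {k : ℕ} {x : Aq n} (hU : x ∈ subalgebraU n)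
    (hV : x ∈ subalgebraV k n) : restrictZeroSection n x = algebraMap ℂ Lz (c00 n x) := by
  ext l
  rw [c00_eq_coeff_restrictZeroSection, ← LaurentPolynomial.C_eq_algebraMap,
    LaurentPolynomial.C_apply]
  rcases lt_trichotomy l 0 with hl | rfl | hl
  · rw [if_neg hl.ne]
    exact coeff_restrictZeroSection_eq_zero (fun h : 0 ≤ l => hl.not_ge h) hU
  · rw [if_pos rfl]
  · rw [if_neg hl.ne']
    refine coeff_restrictZeroSection_eq_zero (fun h : l ≤ k * (0 : ℕ) => ?_) hV
    exact hl.not_ge (by simpa using h)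

lemma exists_mem_mul_eq_one_iff_ne_zero {S : Subalgebra ℂ (Aq n)} {d : Aq n} (hd : d ∈ S)
    {c : ℂ} (hc : restrictZeroSection n d = algebraMap ℂ Lz c) : (∃ w ∈ S, d * w = 1) ↔ c ≠ 0 := by
  constructor
  · rintro ⟨w, -, hw⟩ rfl
    have h01 := congrArg (restrictZeroSection n) hw
    rw [map_mul, hc, map_zero, zero_mul, map_one] at h01
    exact zero_ne_one h01
  · intro hc0
    refine exists_mem_mul_eq_one_of_isNilpotent_sub_algebraMap hd hc0.isUnit
      (isNilpotent_of_restrictZeroSection_eq_zero ?_)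
    rw [map_sub, hc, AlgHom.commutes, sub_self]

end ZeroSection

lemma diag_monA_mul_diag_monA (n : ℕ) (j : ℤ) :
    !![monA n j 0, 0; 0, monA n (-j) 0] * !![monA n (-j) 0, 0; 0, monA n j 0] = 1 := by
  simp [monA_mul_monA, monA_zero_zero, Matrix.one_fin_two]

/-- The transition matrix `diag(z^j, z^{-j})` of `O(j) ⊕ O(-j)` as an invertible matrix over `A`. -/
def splitTransition (n : ℕ) (j : ℤ) : GL (Fin 2) (Aq n) where
  val := !![monA n j 0, 0; 0, monA n (-j) 0]
  inv := !![monA n (-j) 0, 0; 0, monA n j 0]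
  val_inv := diag_monA_mul_diag_monA n j
  inv_val := by simpa only [neg_neg] using diag_monA_mul_diag_monA n (-j)

theorem statement7_general {ι : Type*} [Fintype ι] [DecidableEq ι] (k n : ℕ) (G : GL ι (Aq n))
    (N : Matrix ι ι (Aq n)) (hN : ∀ a b, N a b ∈ OU n)
    (hconj : ∀ a b, (G.val * N * G⁻¹.val) a b ∈ OV k n) :
    ((∃ w ∈ OU n, N.det * w = 1) ∧ ∃ w ∈ OV k n, (G.val * N * G⁻¹.val).det * w = 1) ↔
      c00 n N.det ≠ 0 := by
  have hdet : (G.val * N * G⁻¹.val).det = N.det := Matrix.det_units_conj G N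
  simp only [← mem_subalgebraU, ← mem_subalgebraV] at hN hconj ⊢
  have hU : N.det ∈ subalgebraU n := det_mem_of_forall_mem hN
  have hV : N.det ∈ subalgebraV k n := hdet ▸ det_mem_of_forall_mem hconj
  have hconst := restrictZeroSection_eq_algebraMap_c00 hU hV
  rw [hdet]
  exact (and_congr (exists_mem_mul_eq_one_iff_ne_zero hU hconst)
    (exists_mem_mul_eq_one_iff_ne_zero hV hconst)).trans and_self_iff

/-- for `j ≥ 1` and `D = diag(z^j, z^{−j})`, if `N` is a `2×2` matrix with entries
in `O_U` such that `D·N·D⁻¹` has entries in `O_V`, then (`det N` is a unit of `O_U` and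
`det (D·N·D⁻¹)` is a unit of `O_V`) if and only if the coefficient of `z^0 u^0` in `det N` is
nonzero. -/
theorem statement7 (k n : ℕ) (hk : 1 ≤ k) (hn : 1 ≤ n) (j : ℤ) (hj : 1 ≤ j)
    (N : Matrix (Fin 2) (Fin 2) (Aq n))
    (hN : ∀ a b : Fin 2, N a b ∈ OU n)
    (hconj : ∀ a b : Fin 2,
      (!![monA n j 0, 0; 0, monA n (-j) 0] * N * !![monA n (-j) 0, 0; 0, monA n j 0]) a b
        ∈ OV k n) :
    ((∃ w ∈ OU n, N.det * w = 1) ∧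
      ∃ w ∈ OV k n,
        (!![monA n j 0, 0; 0, monA n (-j) 0] * N *
          !![monA n (-j) 0, 0; 0, monA n j 0]).det * w = 1) ↔
      c00 n N.det ≠ 0 :=
  statement7_general k n (splitTransition n j) N hN hconj
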